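/- Let X be a real linear space, (Y, N) a fuzzy normed space, (Z, N′) a fuzzy normed space, α a real number with 0 < |α| < 2, and φ : X × X → Z with φ(2x, 2y) = α · φ(x, y) for all x, y ∈ X. Suppose f, g, h : X → Y are odd functions such that N (f(x+y) + f(x−y) − 2g(x) − 2h(y)) t ≥ N′ (φ(x, y)) t for all x, y ∈ X and all t ∈ ℝ. Then for all integers n > m ≥ 0, all x ∈ X and all t > 0, N (f(2^n x)/2^n − f(2^m x)/2^m) (Σ_{k=m+1}^{n} (|α|/2)^(k−1) · t) ≥ N″ x t, where N″ x t = min {N′ (φ(x,x)) (t/3), N′ (φ(x,0)) (t/3), N′ (φ(0,x)) (t/3)}. -/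

import Mathlib

/-!
Evaluating the hypothesis at `(x, x)`, `(x, 0)` and `(0, x)`, with `f 0 = g 0 = h 0 = 0` by oddness,
controls `A = f (2x) - 2 g x - 2 h x`, `B = 2 f x - 2 g x` and `C = -2 h x`. Since
`f (2x) - 2 f x = A - B - C`, splitting `t` into three thirds gives
`N'' x t ≤ N (f (2x) - 2 f x) t` (`Ndd_le_doubling`). The homogeneity of `φ` makes
`N'' (2^k x) (|α|^k t) = N'' x t` (`Ndd_two_pow`), so dividing by `2^(k+1)` bounds each increment of
`k ↦ f (2^k x) / 2^k` (`Ndd_le_step`). The increments are summed by induction on `n`, using that a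
fuzzy norm satisfies the triangle inequality with `min`.
-/

open Filter Finset

/-- A fuzzy norm on a real vector space, following Bag–Samanta. -/
structure IsFuzzyNorm {X : Type*} [AddCommGroup X] [Module ℝ X] (N : X → ℝ → ℝ) : Prop where
  nonneg : ∀ (x : X) (t : ℝ), 0 ≤ N x t
  le_one : ∀ (x : X) (t : ℝ), N x t ≤ 1
  eq_zero_of_nonpos : ∀ (x : X) (c : ℝ), c ≤ 0 → N x c = 0
  eq_zero_iff : ∀ x : X, x = 0 ↔ ∀ c : ℝ, 0 < c → N x c = 1
  smul_eq : ∀ (c : ℝ) (x : X) (t : ℝ), c ≠ 0 → N (c • x) t = N x (t / |c|)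
  min_le_add : ∀ (x y : X) (s t : ℝ), min (N x s) (N y t) ≤ N (x + y) (s + t)
  mono : ∀ x : X, Monotone (N x)
  tendsto_one : ∀ x : X, Tendsto (N x) atTop (nhds 1)

/-- Convergence of a sequence to a fuzzy limit in a fuzzy normed space. -/
def FuzzyTendsto {X : Type*} [AddCommGroup X] [Module ℝ X] (N : X → ℝ → ℝ)
    (xs : ℕ → X) (x : X) : Prop :=
  ∀ t : ℝ, 0 < t → Tendsto (fun n => N (xs n - x) t) atTop (nhds 1)

/-- Cauchy sequences in a fuzzy normed space. -/
def FuzzyCauchy {X : Type*} [AddCommGroup X] [Module ℝ X] (N : X → ℝ → ℝ)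
    (xs : ℕ → X) : Prop :=
  ∀ ε : ℝ, 0 < ε → ∀ t : ℝ, 0 < t → ∃ n₀ : ℕ, ∀ n ≥ n₀, ∀ p : ℕ, 0 < p →
    1 - ε < N (xs (n + p) - xs n) t

/-- A fuzzy normed space is complete (a fuzzy Banach space) if every Cauchy
sequence converges. -/
def IsFuzzyComplete {X : Type*} [AddCommGroup X] [Module ℝ X] (N : X → ℝ → ℝ) : Prop :=
  ∀ xs : ℕ → X, FuzzyCauchy N xs → ∃ x : X, FuzzyTendsto N xs x

/-- Quadratic functional equation. -/
def IsQuadratic {X Y : Type*} [AddCommGroup X] [AddCommGroup Y] (Q : X → Y) : Prop :=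
  ∀ x y : X, Q (x + y) + Q (x - y) = 2 • Q x + 2 • Q y

/-- Additive functional equation. -/
def IsAdditive {X Y : Type*} [AddCommGroup X] [AddCommGroup Y] (T : X → Y) : Prop :=
  ∀ x y : X, T (x + y) = T x + T y

/-- The control function `N″ x t = min {N′(φ(x,x))(t/3), N′(φ(x,0))(t/3), N′(φ(0,x))(t/3)}`. -/
noncomputable def Ndd {X Z : Type*} [Zero X] (N' : Z → ℝ → ℝ) (φ : X × X → Z) (x : X) (t : ℝ) : ℝ :=
  min (min (N' (φ (x, x)) (t / 3)) (N' (φ (x, 0)) (t / 3))) (N' (φ (0, x)) (t / 3))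

section Helpers

variable {X Y Z : Type*} [AddCommGroup X] [Module ℝ X]
  [AddCommGroup Y] [Module ℝ Y] [AddCommGroup Z] [Module ℝ Z]

lemma IsFuzzyNorm.neg_eq {N : Y → ℝ → ℝ} (hN : IsFuzzyNorm N) (y : Y) (t : ℝ) :
    N (-y) t = N y t := by
  have := hN.smul_eq (-1) y t (by norm_num)
  simpa using this

lemma odd_map_zero {f : X → Y} (hf : ∀ x, f (-x) = -f x) : f 0 = 0 := by
  have h0 : f 0 = -f 0 := by simpa using hf 0
  have h2 : (2 : ℝ) • f 0 = 0 := by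
    rw [two_smul]
    nth_rewrite 2 [h0]
    exact add_neg_cancel _
  exact (smul_eq_zero.mp h2).resolve_left two_ne_zero

lemma Ndd_le_doubling {N : Y → ℝ → ℝ} {N' : Z → ℝ → ℝ} (hN : IsFuzzyNorm N)
    {φ : X × X → Z} {f g h : X → Y}
    (hfodd : ∀ x : X, f (-x) = -f x) (hgodd : ∀ x : X, g (-x) = -g x)
    (hhodd : ∀ x : X, h (-x) = -h x)
    (hineq : ∀ x y : X, ∀ t : ℝ,
      N' (φ (x, y)) t ≤ N (f (x + y) + f (x - y) - 2 • g x - 2 • h y) t) (x : X) (t : ℝ) :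
    Ndd N' φ x t ≤ N (f ((2 : ℝ) • x) - (2 : ℝ) • f x) t := by
  have hf0 := odd_map_zero hfodd
  have hg0 := odd_map_zero hgodd
  have hh0 := odd_map_zero hhodd
  have hA := hineq x x (t / 3)
  have hB := hineq x 0 (t / 3)
  have hC := hineq 0 x (t / 3)
  rw [← hN.neg_eq] at hB hC
  set A := f (x + x) + f (x - x) - 2 • g x - 2 • h x with hAdef
  set B := -(f (x + 0) + f (x - 0) - 2 • g x - 2 • h 0) with hBdef
  set C := -(f (0 + x) + f (0 - x) - 2 • g 0 - 2 • h x) with hCdef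
  have hsum : f ((2 : ℝ) • x) - (2 : ℝ) • f x = A + B + C := by
    rw [hAdef, hBdef, hCdef]
    simp only [add_zero, sub_zero, zero_add, zero_sub, sub_self, hf0, hg0, hh0, hfodd, two_smul]
    abel
  have ht : t = t / 3 + t / 3 + t / 3 := by ring
  calc Ndd N' φ x t ≤ min (min (N A (t / 3)) (N B (t / 3))) (N C (t / 3)) :=
        min_le_min (min_le_min hA hB) hC
    _ ≤ min (N (A + B) (t / 3 + t / 3)) (N C (t / 3)) :=
        min_le_min (hN.min_le_add _ _ _ _) le_rfl
    _ ≤ N (A + B + C) (t / 3 + t / 3 + t / 3) := hN.min_le_add _ _ _ _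
    _ = N (f ((2 : ℝ) • x) - (2 : ℝ) • f x) t := by rw [← hsum, ← ht]

lemma Ndd_two_pow {N' : Z → ℝ → ℝ} (hN' : IsFuzzyNorm N') {α : ℝ} (hα : 0 < |α|)
    {φ : X × X → Z} (hφ : ∀ x y : X, φ (2 • x, 2 • y) = α • φ (x, y))
    (k : ℕ) (x : X) (t : ℝ) :
    Ndd N' φ ((2 : ℝ) ^ k • x) (|α| ^ k * t) = Ndd N' φ x t := by
  have key : ∀ a b : X, ∀ s : ℝ,
      N' (φ ((2 : ℝ) ^ k • a, (2 : ℝ) ^ k • b)) (|α| ^ k * s) = N' (φ (a, b)) s := by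
    intro a b s
    have hpow : φ ((2 : ℝ) ^ k • a, (2 : ℝ) ^ k • b) = α ^ k • φ (a, b) := by
      induction k with
      | zero => simp
      | succ k ih =>
        have h2 : ∀ c : X, (2 : ℝ) ^ (k + 1) • c = 2 • ((2 : ℝ) ^ k • c) := by
          intro c
          rw [pow_succ', mul_smul, two_smul, two_smul]
        rw [h2, h2, hφ, ih, smul_smul, pow_succ']
    rw [hpow, hN'.smul_eq _ _ _ (pow_ne_zero _ (abs_pos.mp hα)), abs_pow,
      mul_div_cancel_left₀ _ (pow_pos hα k).ne']
  have h1 := key x x (t / 3)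
  have h2 := key x 0 (t / 3)
  have h3 := key 0 x (t / 3)
  rw [smul_zero] at h2 h3
  simp only [Ndd, mul_div_assoc, h1, h2, h3]

lemma Ndd_le_step {N : Y → ℝ → ℝ} {N' : Z → ℝ → ℝ} (hN : IsFuzzyNorm N) (hN' : IsFuzzyNorm N')
    {α : ℝ} (hα : 0 < |α|) {φ : X × X → Z}
    (hφ : ∀ x y : X, φ (2 • x, 2 • y) = α • φ (x, y)) {f : X → Y}
    (hdouble : ∀ x t, Ndd N' φ x t ≤ N (f ((2 : ℝ) • x) - (2 : ℝ) • f x) t)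
    (k : ℕ) (x : X) {t : ℝ} (ht : 0 < t) :
    Ndd N' φ x t ≤
      N (((2 : ℝ) ^ (k + 1))⁻¹ • f (((2 : ℝ) ^ (k + 1)) • x)
          - ((2 : ℝ) ^ k)⁻¹ • f (((2 : ℝ) ^ k) • x)) ((|α| / 2) ^ k * t) := by
  have hvec : ((2 : ℝ) ^ (k + 1))⁻¹ • f (((2 : ℝ) ^ (k + 1)) • x)
      - ((2 : ℝ) ^ k)⁻¹ • f (((2 : ℝ) ^ k) • x)
      = ((2 : ℝ) ^ (k + 1))⁻¹ •
        (f ((2 : ℝ) • ((2 : ℝ) ^ k • x)) - (2 : ℝ) • f ((2 : ℝ) ^ k • x)) := by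
    have hc : ((2 : ℝ) ^ (k + 1))⁻¹ * 2 = ((2 : ℝ) ^ k)⁻¹ := by
      rw [pow_succ]; field_simp
    rw [smul_sub, smul_smul, smul_smul, hc, ← pow_succ']
  have hpos : (0 : ℝ) < ((2 : ℝ) ^ (k + 1))⁻¹ := by positivity
  rw [hvec, hN.smul_eq _ _ _ hpos.ne', abs_of_pos hpos]
  -- After rescaling, the available argument is `2 * |α|^k * t`, twice what is needed.
  have harg : (|α| / 2) ^ k * t / ((2 : ℝ) ^ (k + 1))⁻¹ = 2 * (|α| ^ k * t) := by
    rw [div_pow, pow_succ]; field_simp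
  rw [harg, ← Ndd_two_pow hN' hα hφ k x t]
  have hnn : 0 ≤ |α| ^ k * t := by positivity
  exact (hdouble _ _).trans (hN.mono _ (by linarith))

end Helpers

/-- The telescoping estimate (3.9) in the proof of Proposition 3.1. -/
theorem fuzzy_pexider_odd_telescoping
    {X Y Z : Type*} [AddCommGroup X] [Module ℝ X]
    [AddCommGroup Y] [Module ℝ Y] [AddCommGroup Z] [Module ℝ Z]
    (N : Y → ℝ → ℝ) (N' : Z → ℝ → ℝ)
    (hN : IsFuzzyNorm N) (hN' : IsFuzzyNorm N')
    (α : ℝ) (hα0 : 0 < |α|) (hα2 : |α| < 2)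
    (φ : X × X → Z)
    (hφ : ∀ x y : X, φ (2 • x, 2 • y) = α • φ (x, y))
    (f g h : X → Y)
    (hfodd : ∀ x : X, f (-x) = -f x)
    (hgodd : ∀ x : X, g (-x) = -g x)
    (hhodd : ∀ x : X, h (-x) = -h x)
    (hineq : ∀ x y : X, ∀ t : ℝ,
      N' (φ (x, y)) t ≤ N (f (x + y) + f (x - y) - 2 • g x - 2 • h y) t) :
    ∀ n m : ℕ, m < n → ∀ x : X, ∀ t : ℝ, 0 < t →
      Ndd N' φ x t ≤
        N (((2 : ℝ) ^ n)⁻¹ • f (((2 : ℝ) ^ n) • x) - ((2 : ℝ) ^ m)⁻¹ • f (((2 : ℝ) ^ m) • x))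
          (∑ k ∈ Finset.Ioc m n, (|α| / 2) ^ (k - 1) * t) := by
  intro n m hmn x t ht
  have hstep := fun k => Ndd_le_step hN hN' hα0 hφ
    (Ndd_le_doubling hN hfodd hgodd hhodd hineq) k x ht
  induction n, hmn using Nat.le_induction with
  | base => simpa using hstep m
  | succ n hmn ih =>
    rw [Finset.sum_Ioc_succ_top (by omega), Nat.add_sub_cancel]
    have hadd := (le_min ih (hstep n)).trans (hN.min_le_add _ _ _ _)
    rwa [add_comm (_ - _) (_ - _), sub_add_sub_cancel] at hadd
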